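/- arXiv:1404.0956 — 3 statements merged into one kernel-verified Lean document; each statement's English description precedes it below -/
import Mathlib

section
/- SK-calculus is combinatorially complete: for all pairwise distinct variables x1,…,xn and every SK-term M whose free variables are among {x1,…,xn}, there exists a closed SK-combinator G (one may take G = λ*x1.…λ*xn.M) such that for all SK-combinators X1,…,Xn it holds that G X1 ⋯ Xn →* M[X1/x1,…,Xn/xn], the simultaneous substitution of the Xi for the xi in M. -/
/-! SK-terms: SK-combinators extended with variables. -/

inductive SKt : Type
  | var : ℕ → SKt
  | S : SKt
  | K : SKt
  | app : SKt → SKt → SKt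
  deriving DecidableEq

/-- The reduction relation of SK-calculus (on SK-terms; variables are inert). -/
inductive SKred : SKt → SKt → Prop
  | Srule (M N X : SKt) :
      SKred (.app (.app (.app .S M) N) X) (.app (.app M X) (.app N X))
  | Krule (X Y : SKt) : SKred (.app (.app .K X) Y) X
  | appL {M M' : SKt} (N : SKt) : SKred M M' → SKred (.app M N) (.app M' N)
  | appR (M : SKt) {N N' : SKt} : SKred N N' → SKred (.app M N) (.app M N')

/-- Closed SK-combinators. -/
inductive SK : Type
  | S : SK
  | K : SK
  | app : SK → SK → SK
  deriving DecidableEq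

/-- Inclusion of SK-combinators into SK-terms. -/
def SK.toTerm : SK → SKt
  | .S => .S
  | .K => .K
  | .app M N => .app M.toTerm N.toTerm

/-- Free variables of an SK-term. -/
def SKt.fv : SKt → Finset ℕ
  | .var y => {y}
  | .S => ∅
  | .K => ∅
  | .app M N => M.fv ∪ N.fv

/-- Simultaneous substitution: replace each variable `y` by `f y`. -/
def SKt.msub (f : ℕ → SKt) : SKt → SKt
  | .var y => f y
  | .S => .S
  | .K => .K
  | .app M N => .app (SKt.msub f M) (SKt.msub f N)

/-- Iterated application `G X₁ ⋯ Xₙ`. -/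
def SKt.applyList (G : SKt) (Xs : List SKt) : SKt := Xs.foldl SKt.app G

/-!
The witness is the iterated bracket abstraction `λ*x₁.…λ*xₙ.M`. The reduction
`(λ*x.M) X →* M[X/x]` is proved under an arbitrary substitution `σ` for the remaining variables,
as `(λ*x.M)[σ] X →* M[σ, X/x]`. In this form it can be iterated along `x₁,…,xₙ`, the substitution
accumulating one argument at a time, without ever composing or commuting substitutions.
-/

open Relation (ReflTransGen)

theorem getD_lookup_cons_eq_getD_lookup_update {α β : Type*} [DecidableEq α] {a : α}
    {l : List (α × β)} (ha : ∀ p ∈ l, p.1 ≠ a) (b : β) (f : α → β) (c : α) :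
    (((a, b) :: l).lookup c).getD (f c) = (l.lookup c).getD (Function.update f a b c) := by
  by_cases hc : c = a
  · subst hc
    have lookup_none : l.lookup c = none :=
      List.lookup_eq_none_iff.2 fun p hp => by simpa using (ha p hp).symm
    simp [lookup_none]
  · simp [List.lookup_cons, beq_eq_false_iff_ne.2 hc, hc]

namespace SKt

/-- Bracket abstraction `λ*x.M`, the SK-term that represents `M` as a function of `x`. -/
def bracket (x : ℕ) : SKt → SKt
  | var y => if y = x then app (app S K) K else app K (var y)
  | S => app K S
  | K => app K K
  | app M N => app (app S (bracket x M)) (bracket x N)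

/-- Iterated bracket abstraction `λ*x₁.…λ*xₙ.M`, with the head of the list outermost. -/
def bracketList (xs : List ℕ) (M : SKt) : SKt := xs.foldr bracket M

theorem fv_bracket (x : ℕ) (M : SKt) : (bracket x M).fv = M.fv.erase x := by
  induction M with
  | var y =>
    by_cases hy : y = x
    · simp [bracket, fv, hy]
    · simp [bracket, fv, hy, Ne.symm hy]
  | S | K => simp [bracket, fv]
  | app M N ihM ihN => simp [bracket, fv, ihM, ihN, Finset.erase_union_distrib]

theorem fv_bracketList (xs : List ℕ) (M : SKt) :
    (bracketList xs M).fv = M.fv \ xs.toFinset := by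
  induction xs with
  | nil => simp [bracketList]
  | cons x xs ih =>
    calc (bracket x (bracketList xs M)).fv
      _ = (M.fv \ xs.toFinset).erase x := by rw [fv_bracket, ih]
      _ = M.fv \ (x :: xs).toFinset := by rw [List.toFinset_cons, Finset.sdiff_insert]

theorem exists_toTerm_eq_of_fv_eq_empty {M : SKt} (hM : M.fv = ∅) : ∃ G : SK, G.toTerm = M := by
  induction M with
  | var y => simp [fv] at hM
  | S => exact ⟨.S, rfl⟩
  | K => exact ⟨.K, rfl⟩
  | app M N ihM ihN =>
    obtain ⟨hM, hN⟩ := Finset.union_eq_empty.1 hM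
    obtain ⟨G, rfl⟩ := ihM hM
    obtain ⟨H, rfl⟩ := ihN hN
    exact ⟨.app G H, rfl⟩

theorem msub_var (M : SKt) : M.msub var = M := by
  induction M with
  | var | S | K => rfl
  | app M N ihM ihN => rw [msub, ihM, ihN]

end SKt

namespace SKred

open SKt

theorem reflTransGen_app {M M' N N' : SKt} (hM : ReflTransGen SKred M M')
    (hN : ReflTransGen SKred N N') : ReflTransGen SKred (M.app N) (M'.app N') :=
  (hM.lift (app · N) fun _ _ => appL N).trans (hN.lift (app M') fun _ _ => appR M')

theorem reflTransGen_applyList {G H : SKt} (hGH : ReflTransGen SKred G H) (Xs : List SKt) :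
    ReflTransGen SKred (G.applyList Xs) (H.applyList Xs) := by
  induction Xs generalizing G H with
  | nil => exact hGH
  | cons _ _ ih => exact ih (reflTransGen_app hGH .refl)

theorem reflTransGen_skk_app (X : SKt) :
    ReflTransGen SKred (app (app (app S K) K) X) X :=
  .head (Srule K K X) (.single (Krule X (app K X)))

theorem reflTransGen_bracket_msub_app (x : ℕ) (σ : ℕ → SKt) (M X : SKt) :
    ReflTransGen SKred (app ((bracket x M).msub σ) X) (M.msub (Function.update σ x X)) := by
  induction M with
  | var y =>
    by_cases hy : y = x
    · simpa [bracket, msub, hy] using reflTransGen_skk_app X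
    · simpa [bracket, msub, hy] using ReflTransGen.single (Krule (σ y) X)
  | S | K => exact .single (Krule _ X)
  | app M N ihM ihN => exact .head (Srule _ _ X) (reflTransGen_app ihM ihN)

theorem reflTransGen_bracketList_msub_applyList {xs : List ℕ} (hxs : xs.Nodup) (σ : ℕ → SKt)
    (M : SKt) {Xs : List SKt} (hlen : Xs.length = xs.length) :
    ReflTransGen SKred (((bracketList xs M).msub σ).applyList Xs)
      (M.msub fun y => ((xs.zip Xs).lookup y).getD (σ y)) := by
  induction xs generalizing σ Xs with
  | nil =>
    obtain rfl := List.length_eq_zero_iff.1 hlen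
    exact .refl
  | cons x xs ih =>
    obtain ⟨X, Xs, rfl⟩ := List.exists_cons_of_length_eq_add_one hlen
    obtain ⟨hx, hxs⟩ := List.nodup_cons.1 hxs
    have x_not_key : ∀ p ∈ xs.zip Xs, p.1 ≠ x := fun p hp hpx =>
      hx (hpx ▸ (List.of_mem_zip hp).1)
    simp only [List.zip_cons_cons, getD_lookup_cons_eq_getD_lookup_update x_not_key]
    have contract_head := reflTransGen_bracket_msub_app x σ (bracketList xs M) X
    exact (reflTransGen_applyList contract_head Xs).trans
      (ih hxs (Function.update σ x X) (Nat.succ.inj hlen))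

end SKred

theorem SK_combinatorially_complete_general (xs : List ℕ) (hnd : xs.Nodup) (M : SKt)
    (hfv : ∀ x ∈ M.fv, x ∈ xs) :
    ∃ G : SK, ∀ Xs : List SKt, Xs.length = xs.length →
      ReflTransGen SKred (G.toTerm.applyList Xs)
        (M.msub fun y => ((xs.zip Xs).lookup y).getD (SKt.var y)) := by
  have closed : (SKt.bracketList xs M).fv = ∅ := by
    rw [SKt.fv_bracketList, Finset.sdiff_eq_empty_iff_subset]
    exact fun x hx => List.mem_toFinset.2 (hfv x hx)
  obtain ⟨G, hG⟩ := SKt.exists_toTerm_eq_of_fv_eq_empty closed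
  refine ⟨G, fun Xs hlen => ?_⟩
  simpa only [hG, SKt.msub_var] using
    SKred.reflTransGen_bracketList_msub_applyList hnd SKt.var M hlen

/-- SK-calculus is combinatorially complete: for pairwise distinct
variables `x₁,…,xₙ` and an SK-term `M` with free variables among them, there is a
closed SK-combinator `G` such that `G X₁ ⋯ Xₙ →* M[X₁/x₁,…,Xₙ/xₙ]` for all
SK-combinators `X₁,…,Xₙ`. -/
theorem SK_combinatorially_complete (xs : List ℕ) (hnd : xs.Nodup) (M : SKt)
    (hfv : ∀ x ∈ M.fv, x ∈ xs) :
    ∃ G : SK, ∀ Xs : List SK, Xs.length = xs.length →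
      Relation.ReflTransGen SKred
        (SKt.applyList G.toTerm (Xs.map SK.toTerm))
        (SKt.msub
          (fun y => (((xs.zip (Xs.map SK.toTerm)).lookup y).getD (SKt.var y))) M) := by
  obtain ⟨G, hG⟩ := SK_combinatorially_complete_general xs hnd M hfv
  exact ⟨G, fun Xs hlen => hG (Xs.map SK.toTerm) (by rwa [List.length_map])⟩
end

section
/- Factorisation of SK-combinators is not representable within SK-calculus: there is no SK-combinator F such that, writing =_SK for the least equivalence relation containing the SK reduction relation →, both (a) F A M N =_SK M for all SK-combinators M, N and every atom A ∈ {S, K}, and (b) F (X Y) M N =_SK N X Y for all SK-combinators M, N and every compound X Y, where the compounds are the partially applied operators that are applications, i.e., the combinators of one of the forms S Z, S Z W, or K Z. -/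
/-- The reduction relation of SK-calculus. -/
inductive SKcred : SK → SK → Prop
  | Srule (M N X : SK) :
      SKcred (.app (.app (.app .S M) N) X) (.app (.app M X) (.app N X))
  | Krule (X Y : SK) : SKcred (.app (.app .K X) Y) X
  | appL {M M' : SK} (N : SK) : SKcred M M' → SKcred (.app M N) (.app M' N)
  | appR (M : SK) {N N' : SK} : SKcred N N' → SKcred (.app M N) (.app M N')

/-- The compounds of SK-calculus: the partially applied operators that are
applications, namely the combinators of the forms `S Z`, `S Z W` and `K Z`. -/
inductive SKcompound : SK → Prop
  | SZ (Z : SK) : SKcompound (.app .S Z)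
  | SZW (Z W : SK) : SKcompound (.app (.app .S Z) W)
  | KZ (Z : SK) : SKcompound (.app .K Z)

/-- Equality `=_SK` of SK-combinators: the least equivalence relation
containing the reduction relation. -/
def SKeq : SK → SK → Prop := Relation.EqvGen SKcred

/-!
Engeler's graph algebra is a model of SK-calculus in which a denotation of the form `graph f`
depends only on the function `f`. Since `S K Z X` reduces to `X`, every `S K Z` denotes the graph of
the identity function, whatever `Z` is. A factorisation combinator would recover `Z` from `S K Z` by
`F (S K Z) M (K I) = K I (S K) Z = Z`, so all combinators would have the same denotation; but `S`
and `K` have different ones.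
-/

/-- Finitary (equivalently, Scott-continuous) functions between powersets: each element of the
output is determined by finitely many elements of the input. Finite sets are given by lists because
the points of `Engeler` carry lists. -/
def IsFinitary {α β : Type*} (f : Set α → Set β) : Prop :=
  ∀ X b, b ∈ f X ↔ ∃ l : List α, {x | x ∈ l} ⊆ X ∧ b ∈ f {x | x ∈ l}

namespace IsFinitary

variable {α β : Type*}

protected theorem monotone {f : Set α → Set β} (hf : IsFinitary f) : Monotone f := by
  intro X Y hXY b hb
  obtain ⟨l, hlX, hbl⟩ := (hf X b).1 hb
  exact (hf Y b).2 ⟨l, hlX.trans hXY, hbl⟩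

protected theorem const (Y : Set β) : IsFinitary fun _ : Set α => Y :=
  fun _ _ => ⟨fun hb => ⟨[], by simp, hb⟩, fun ⟨_, _, hb⟩ => hb⟩

protected theorem id : IsFinitary fun X : Set α => X :=
  fun _ b => ⟨fun hb => ⟨[b], by simpa using hb, by simp⟩, fun ⟨_, hlX, hb⟩ => hlX hb⟩

theorem exists_list_subset {f : Set α → Set β} (hf : IsFinitary f) {X : Set α} {m : List β}
    (hm : {b | b ∈ m} ⊆ f X) :
    ∃ l : List α, {x | x ∈ l} ⊆ X ∧ {b | b ∈ m} ⊆ f {x | x ∈ l} := by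
  induction m with
  | nil => exact ⟨[], by simp, by simp⟩
  | cons c m ih =>
    obtain ⟨l, hlX, hml⟩ := ih fun b hb => hm (List.mem_cons_of_mem c hb)
    obtain ⟨k, hkX, hck⟩ := (hf X c).1 (hm List.mem_cons_self)
    refine ⟨k ++ l, fun x hx => (List.mem_append.1 hx).elim (@hkX x) (@hlX x), fun b hb => ?_⟩
    rcases List.mem_cons.1 hb with rfl | hb
    · exact hf.monotone (fun _ => List.mem_append_left l) hck
    · exact hf.monotone (fun _ => List.mem_append_right k) (hml hb)

end IsFinitary

/-- The points of Engeler's graph algebra over a type `A` of atoms. The elements of the algebra are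
sets of points; `arrow l b` stands for the input-output pair `({x | x ∈ l}, b)` of a function
between such sets. -/
inductive Engeler (A : Type*)
  | atom : A → Engeler A
  | arrow : List (Engeler A) → Engeler A → Engeler A

namespace Engeler

variable {A : Type*}

/-- Application in the graph algebra: the outputs of `M` on the finite subsets of `N`. -/
def app (M N : Set (Engeler A)) : Set (Engeler A) :=
  {b | ∃ l : List (Engeler A), {x | x ∈ l} ⊆ N ∧ arrow l b ∈ M}

/-- The element of the graph algebra that represents a function between sets of points; it applies
as `f` does when `f` is finitary. -/
def graph (f : Set (Engeler A) → Set (Engeler A)) : Set (Engeler A) :=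
  {p | ∃ l b, p = arrow l b ∧ b ∈ f {x | x ∈ l}}

@[simp]
theorem arrow_mem_graph {f : Set (Engeler A) → Set (Engeler A)} {l : List (Engeler A)}
    {b : Engeler A} : arrow l b ∈ graph f ↔ b ∈ f {x | x ∈ l} := by
  simp [graph]

@[simp]
theorem atom_notMem_graph (f : Set (Engeler A) → Set (Engeler A)) (a : A) : atom a ∉ graph f := by
  simp [graph]

theorem app_graph {f : Set (Engeler A) → Set (Engeler A)} (hf : IsFinitary f)
    (X : Set (Engeler A)) : app (graph f) X = f X := by
  ext b
  simp only [app, arrow_mem_graph, Set.mem_ofPred_eq]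
  exact (hf X b).symm

theorem app_mono {M M' N N' : Set (Engeler A)} (hM : M ⊆ M') (hN : N ⊆ N') :
    app M N ⊆ app M' N' :=
  fun _ ⟨l, hlN, hl⟩ => ⟨l, hlN.trans hN, hM hl⟩

end Engeler

namespace IsFinitary

open Engeler

variable {α A : Type*}

protected theorem graph {f : Set α → Set (Engeler A) → Set (Engeler A)}
    (hf : ∀ Y, IsFinitary fun X => f X Y) : IsFinitary fun X => graph (f X) := by
  rintro X (a | ⟨m, b⟩)
  · simp only [atom_notMem_graph, and_false, exists_false]
  · simpa only [arrow_mem_graph] using hf {y | y ∈ m} X b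

protected theorem app {f g : Set α → Set (Engeler A)} (hf : IsFinitary f) (hg : IsFinitary g) :
    IsFinitary fun X => app (f X) (g X) := by
  refine fun X b => ⟨?_, fun ⟨l, hlX, hb⟩ => app_mono (hf.monotone hlX) (hg.monotone hlX) hb⟩
  rintro ⟨m, hmg, hmf⟩
  obtain ⟨k, hkX, hmk⟩ := (hf X _).1 hmf
  obtain ⟨l, hlX, hml⟩ := hg.exists_list_subset hmg
  exact ⟨k ++ l, fun x hx => (List.mem_append.1 hx).elim (@hkX x) (@hlX x), m,
    hml.trans (hg.monotone fun _ => List.mem_append_right k),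
    hf.monotone (fun _ => List.mem_append_left l) hmk⟩

end IsFinitary

namespace Engeler

variable {A : Type*}

/-- The combinator `K` of the graph algebra. -/
def k : Set (Engeler A) :=
  graph fun X => graph fun _ => X

/-- The combinator `S` of the graph algebra. -/
def s : Set (Engeler A) :=
  graph fun M => graph fun N => graph fun X => app (app M X) (app N X)

theorem app_app_k (X Y : Set (Engeler A)) : app (app k X) Y = X := by
  rw [k, app_graph (.graph fun _ => .id), app_graph (.const X)]

theorem app_app_s (M N : Set (Engeler A)) :
    app (app s M) N = graph fun X => app (app M X) (app N X) := by
  rw [s, app_graph (.graph fun N => .graph fun X => .app (.app .id (.const X)) (.const (app N X))),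
    app_graph (.graph fun X => .app (.const (app M X)) (.app .id (.const X)))]

theorem app_app_app_s (M N X : Set (Engeler A)) :
    app (app (app s M) N) X = app (app M X) (app N X) := by
  rw [app_app_s, app_graph (.app (.app (.const M) .id) (.app (.const N) .id))]

theorem app_app_s_k (Z : Set (Engeler A)) : app (app s k) Z = graph id := by
  simp only [app_app_s, app_app_k]
  rfl

theorem s_ne_k [Nonempty A] : (s : Set (Engeler A)) ≠ k := by
  obtain ⟨a⟩ := ‹Nonempty A›
  have mem_k : arrow [atom a] (arrow [] (atom a)) ∈ k := by simp [k]
  have notMem_s : arrow [atom a] (arrow [] (atom a)) ∉ s := by simp [s]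
  exact fun h => notMem_s (h ▸ mem_k)

/-- The interpretation of SK-combinators in the graph algebra. -/
def denote (A : Type*) : SK → Set (Engeler A)
  | .S => s
  | .K => k
  | .app M N => app (denote A M) (denote A N)

theorem denote_eq_of_SKcred {M N : SK} (h : SKcred M N) : denote A M = denote A N := by
  induction h with
  | Srule M N X => exact app_app_app_s _ _ _
  | Krule X Y => exact app_app_k _ _
  | appL N _ ih => exact congrArg (app · (denote A N)) ih
  | appR M _ ih => exact congrArg (app (denote A M)) ih

theorem denote_eq_of_SKeq {M N : SK} (h : SKeq M N) : denote A M = denote A N :=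
  (Setoid.ker (denote A)).iseqv.eqvGen_iff.1 (h.mono fun _ _ => denote_eq_of_SKcred)

end Engeler

theorem no_factorisation_in_SK_general :
    ¬ ∃ F : SK, ∀ X Y M N : SK, SKcompound (.app X Y) →
      SKeq (.app (.app (.app F (.app X Y)) M) N) (.app (.app N X) Y) := by
  rintro ⟨F, hF⟩
  let SKZ (Z : SK) : SK := .app (.app .S .K) Z
  let recover (Z : SK) : SK := .app (.app (.app F (SKZ Z)) .S) (.app .K (SKZ .K))
  have denote_recover (Z : SK) : Engeler.denote Unit (recover Z) = Engeler.denote Unit Z := by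
    rw [Engeler.denote_eq_of_SKeq (hF (.app .S .K) Z .S (.app .K (SKZ .K)) (.SZW .K Z))]
    simp only [SKZ, Engeler.denote, Engeler.app_app_k, Engeler.app_app_app_s]
  have denote_recover_const :
      Engeler.denote Unit (recover .S) = Engeler.denote Unit (recover .K) := by
    simp only [recover, SKZ, Engeler.denote, Engeler.app_app_s_k]
  apply Engeler.s_ne_k (A := Unit)
  calc Engeler.denote Unit .S
      _ = Engeler.denote Unit (recover .S) := (denote_recover .S).symm
      _ = Engeler.denote Unit (recover .K) := denote_recover_const
      _ = Engeler.denote Unit .K := denote_recover .K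

/-- Factorisation of SK-combinators is not representable within
SK-calculus: there is no SK-combinator `F` with `F A M N =_SK M` for all atoms
`A ∈ {S, K}` and `F (X Y) M N =_SK N X Y` for all compounds `X Y`. -/
theorem no_factorisation_in_SK :
    ¬ ∃ F : SK,
      (∀ M N : SK, SKeq (.app (.app (.app F .S) M) N) M) ∧
      (∀ M N : SK, SKeq (.app (.app (.app F .K) M) N) M) ∧
      (∀ X Y M N : SK, SKcompound (.app X Y) →
        SKeq (.app (.app (.app F (.app X Y)) M) N) (.app (.app N X) Y)) := by
  rintro ⟨F, -, -, hF⟩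
  exact no_factorisation_in_SK_general ⟨F, hF⟩
end

section
/- The translation from SK-calculus to SF-calculus given by ⟦S⟧ = S, ⟦K⟧ = F F, and ⟦M N⟧ = ⟦M⟧ ⟦N⟧ is a reduction-preserving and reduction-reflecting homomorphism: (i) if M → N in SK-calculus then ⟦M⟧ → ⟦N⟧ in SF-calculus (in a single step); and (ii) if ⟦M⟧ → T in SF-calculus then there exists an SK-combinator N with M → N in SK-calculus and T = ⟦N⟧. -/
/-! SF-calculus: combinators, compounds and reduction. -/

inductive SF : Type
  | S : SF
  | F : SF
  | app : SF → SF → SF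
  deriving DecidableEq

/-- The compounds of SF-calculus: factorable forms that are applications,
i.e. the combinators of the forms `S Z`, `S Z W`, `F Z`, `F Z W`. -/
inductive SFcompound : SF → Prop
  | SZ (Z : SF) : SFcompound (.app .S Z)
  | SZW (Z W : SF) : SFcompound (.app (.app .S Z) W)
  | FZ (Z : SF) : SFcompound (.app .F Z)
  | FZW (Z W : SF) : SFcompound (.app (.app .F Z) W)

/-- The reduction relation of SF-calculus. -/
inductive SFred : SF → SF → Prop
  | Srule (M N X : SF) :
      SFred (.app (.app (.app .S M) N) X) (.app (.app M X) (.app N X))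
  | FS (M N : SF) : SFred (.app (.app (.app .F .S) M) N) M
  | FF (M N : SF) : SFred (.app (.app (.app .F .F) M) N) M
  | Fcomp (X Y M N : SF) : SFcompound (.app X Y) →
      SFred (.app (.app (.app .F (.app X Y)) M) N) (.app (.app N X) Y)
  | appL {M M' : SF} (N : SF) : SFred M M' → SFred (.app M N) (.app M' N)
  | appR (M : SF) {N N' : SF} : SFred N N' → SFred (.app M N) (.app M N')

/-- The translation from SK-calculus to SF-calculus:
`⟦S⟧ = S`, `⟦K⟧ = F F`, `⟦M N⟧ = ⟦M⟧ ⟦N⟧`. -/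
def trSKSF : SK → SF
  | .S => .S
  | .K => .app .F .F
  | .app M N => .app (trSKSF M) (trSKSF N)

/-!
Every `F` in a translated term occurs inside a copy of `⟦K⟧ = F F`, so an `F` in head position is
always applied to `F` first. Hence a translated term never contains a redex `F S M N` or
`F (X Y) M N`, while its `S`-redexes and its redexes `F F M N` are exactly the images of the
`S`- and `K`-redexes of the source.
-/

theorem SKcred.sfred_trSKSF {M N : SK} (h : SKcred M N) : SFred (trSKSF M) (trSKSF N) := by
  induction h with
  | Srule => exact .Srule _ _ _
  | Krule => exact .FF _ _
  | appL _ _ ih => exact .appL _ ih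
  | appR _ _ ih => exact .appR _ ih

theorem not_sfred_F_app_F (T : SF) : ¬ SFred (.app .F .F) T := by
  intro h
  cases h with
  | appL _ hF => cases hF
  | appR _ hF => cases hF

theorem trSKSF_ne_F (M : SK) : trSKSF M ≠ .F := by
  cases M <;> simp [trSKSF]

theorem trSKSF_eq_S_iff {M : SK} : trSKSF M = .S ↔ M = .S := by
  cases M <;> simp [trSKSF]

theorem trSKSF_eq_F_app_iff {M : SK} {X : SF} : trSKSF M = .app .F X ↔ M = .K ∧ X = .F := by
  cases M <;> simp [trSKSF, trSKSF_ne_F, eq_comm (a := X)]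

theorem trSKSF_eq_app_iff {M : SK} {A B : SF} (hA : A ≠ .F) :
    trSKSF M = .app A B ↔ ∃ P Q, M = .app P Q ∧ trSKSF P = A ∧ trSKSF Q = B := by
  cases M <;> simp [trSKSF, hA.symm]

theorem trSKSF_eq_S_app_app_iff {M : SK} {A B : SF} :
    trSKSF M = .app (.app .S A) B ↔
      ∃ P Q, M = .app (.app .S P) Q ∧ trSKSF P = A ∧ trSKSF Q = B := by
  constructor
  · intro h
    obtain ⟨R, Q, rfl, hR, hQ⟩ := (trSKSF_eq_app_iff (by simp)).mp h
    obtain ⟨L, P, rfl, hL, hP⟩ := (trSKSF_eq_app_iff (by simp)).mp hR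
    obtain rfl := trSKSF_eq_S_iff.mp hL
    exact ⟨P, Q, rfl, hP, hQ⟩
  · rintro ⟨P, Q, rfl, rfl, rfl⟩
    rfl

theorem trSKSF_eq_F_app_app_iff {M : SK} {X A : SF} :
    trSKSF M = .app (.app .F X) A ↔ X = .F ∧ ∃ P, M = .app .K P ∧ trSKSF P = A := by
  constructor
  · intro h
    obtain ⟨L, P, rfl, hL, hP⟩ := (trSKSF_eq_app_iff (by simp)).mp h
    obtain ⟨rfl, hX⟩ := trSKSF_eq_F_app_iff.mp hL
    exact ⟨hX, P, rfl, hP⟩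
  · rintro ⟨rfl, P, rfl, rfl⟩
    rfl

theorem exists_skcred_of_sfred_trSKSF {M : SK} {T : SF} (h : SFred (trSKSF M) T) :
    ∃ N, SKcred M N ∧ T = trSKSF N := by
  induction M generalizing T with
  | S => cases h
  | K => exact absurd h (not_sfred_F_app_F T)
  | app P Q ihP ihQ =>
    rw [trSKSF] at h
    generalize hP : trSKSF P = U at h
    cases h with
    | Srule =>
      obtain ⟨A, B, rfl, rfl, rfl⟩ := trSKSF_eq_S_app_app_iff.mp hP
      exact ⟨_, .Srule A B Q, rfl⟩
    | FS => simp [trSKSF_eq_F_app_app_iff] at hP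
    | FF =>
      obtain ⟨-, A, rfl, rfl⟩ := trSKSF_eq_F_app_app_iff.mp hP
      exact ⟨A, .Krule A Q, rfl⟩
    | Fcomp => simp [trSKSF_eq_F_app_app_iff] at hP
    | appL _ hred =>
      subst hP
      obtain ⟨P', hP', rfl⟩ := ihP hred
      exact ⟨_, .appL Q hP', rfl⟩
    | appR _ hred =>
      subst hP
      obtain ⟨Q', hQ', rfl⟩ := ihQ hred
      exact ⟨_, .appR P hQ', rfl⟩

/-- The translation `⟦S⟧ = S`, `⟦K⟧ = F F`, `⟦M N⟧ = ⟦M⟧ ⟦N⟧` from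
SK-calculus to SF-calculus preserves reduction (in a single step) and reflects
reduction. -/
theorem trSKSF_preserves_and_reflects :
    (∀ M N : SK, SKcred M N → SFred (trSKSF M) (trSKSF N)) ∧
    (∀ (M : SK) (T : SF), SFred (trSKSF M) T →
      ∃ N : SK, SKcred M N ∧ T = trSKSF N) :=
  ⟨fun _ _ h => h.sfred_trSKSF, fun _ _ h => exists_skcred_of_sfred_trSKSF h⟩
end
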